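/- Let G be a quasi-banana graph with first gonality gon_1(G) = k. Then the genus of G is g(G) = |E(G)| - |V(G)| + 1 = k(k-1)/2 = C(k,2). -/

import Mathlib

open Finset

variable {V : Type*} [Fintype V] [DecidableEq V]

/-- A finite loopless multigraph on vertex type `V`, given by symmetric edge multiplicities. -/
structure Multigraph (V : Type*) [Fintype V] [DecidableEq V] where
  mult : V → V → ℕ
  symm : ∀ u v, mult u v = mult v u
  loopless : ∀ v, mult v v = 0

namespace Multigraph

def Adj (G : Multigraph V) (u v : V) : Prop := 0 < G.mult u v

/-- A graph is connected. -/
def Connected (G : Multigraph V) : Prop :=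
  Nonempty V ∧ ∀ u v : V, Relation.ReflTransGen G.Adj u v

/-- Valence of a vertex. -/
def valence (G : Multigraph V) (v : V) : ℕ := ∑ u, G.mult v u

/-- The Laplacian applied to an integer-valued function on the vertices. -/
def laplacian (G : Multigraph V) (f : V → ℤ) : V → ℤ :=
  fun w => ∑ u, (G.mult w u : ℤ) * (f w - f u)

/-- Degree of a divisor. -/
def degree (D : V → ℤ) : ℤ := ∑ v, D v

/-- A divisor is effective if all coefficients are nonnegative. -/
def Effective (D : V → ℤ) : Prop := ∀ v, 0 ≤ D v

/-- Linear equivalence of divisors: they differ by a sequence of chip-firing moves,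
equivalently by a Laplacian of an integer function. -/
def LinEquiv (G : Multigraph V) (D D' : V → ℤ) : Prop :=
  ∃ f : V → ℤ, D' = D - G.laplacian f

/-- A divisor is winnable if it is linearly equivalent to an effective divisor. -/
def Winnable (G : Multigraph V) (D : V → ℤ) : Prop :=
  ∃ E : V → ℤ, Effective E ∧ G.LinEquiv D E

/-- The Baker–Norine rank of a divisor: the largest `r` such that `D - E` is winnable for
every effective divisor `E` of degree `r` (the defining set contains all negative integers,
and its supremum is `-1` precisely when `D` itself is not winnable). -/
noncomputable def rank (G : Multigraph V) (D : V → ℤ) : ℤ :=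
  sSup {r : ℤ | ∀ E : V → ℤ, Effective E → degree E = r → G.Winnable (fun w => D w - E w)}

/-- The `k`-th gonality of a graph: the smallest degree of a divisor of rank `k`. -/
noncomputable def gonality (G : Multigraph V) (k : ℤ) : ℤ :=
  sInf {d : ℤ | ∃ D : V → ℤ, G.rank D = k ∧ degree D = d}

/-- A graph is gonality-tight if its second gonality exceeds its first by exactly 1. -/
def GonalityTight (G : Multigraph V) : Prop :=
  G.gonality 2 = G.gonality 1 + 1

/-- A divisor realises the `k`-th gonality if it has rank `k` and degree `gon_k(G)`. -/
def Realises (G : Multigraph V) (k : ℤ) (D : V → ℤ) : Prop :=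
  G.rank D = k ∧ degree D = G.gonality k

/-- A divisor is `v`-reduced: nonnegative away from `v`, and set-firing any nonempty set of
vertices not containing `v` creates a negative coefficient inside the set. -/
def Reduced (G : Multigraph V) (v : V) (D : V → ℤ) : Prop :=
  (∀ w, w ≠ v → 0 ≤ D w) ∧
    ∀ U : Finset V, U.Nonempty → v ∉ U →
      ∃ w ∈ U, D w - ∑ u ∈ Uᶜ, (G.mult w u : ℤ) < 0

/-- The genus (first Betti number) of a graph: `|E| - |V| + 1`. -/
def genus (G : Multigraph V) : ℤ :=
  ((∑ u, ∑ v, G.mult u v : ℕ) : ℤ) / 2 - Fintype.card V + 1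

/-- The canonical divisor of a graph. -/
def canonical (G : Multigraph V) : V → ℤ :=
  fun w => (G.valence w : ℤ) - 2

/-- The subgraph induced on a set `S` of vertices (with all edges among `S`). -/
def induce (G : Multigraph V) (S : Finset V) : Multigraph {x // x ∈ S} where
  mult a b := G.mult a b
  symm a b := G.symm a b
  loopless a := G.loopless a

/-- `G.SeparatedBy u w v` means every path from `w` to `v` passes through `u`. -/
def SeparatedBy (G : Multigraph V) (u w v : V) : Prop :=
  ¬ Relation.ReflTransGen (fun x y => G.Adj x y ∧ x ≠ u ∧ y ≠ u) w v

end Multigraph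

/-- Size of the `i`-th level of a quasi-banana graph: level `0` has a single vertex. -/
def qbSize (q : ℕ → ℕ) (i : ℕ) : ℕ := if i = 0 then 1 else q i

/-- `ℓ` is a quasi-banana labelling of `G` exhibiting `G ≅ QB_m(q_1, …, q_m)`:
`ℓ` is a bijection onto the pairs `(i, j)` with `i ≤ m`, `1 ≤ j ≤ qbSize q i`
(vertex `u_{i,j}` is the vertex labelled `(i,j)`), and the edge multiplicities are:
one edge between distinct vertices of the same level, `(∑_{k=1}^{i} q_k) + 2` edges
between `u_{i,1}` and each `u_{i+1,j}`, and no other edges. -/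
def Multigraph.IsQBLabelling (G : Multigraph V) (m : ℕ) (q : ℕ → ℕ) (ℓ : V → ℕ × ℕ) : Prop :=
  (∀ i, 1 ≤ i → i ≤ m → 0 < q i) ∧
  Function.Injective ℓ ∧
  (∀ v : V, (ℓ v).1 ≤ m ∧ 1 ≤ (ℓ v).2 ∧ (ℓ v).2 ≤ qbSize q (ℓ v).1) ∧
  (∀ i j : ℕ, i ≤ m → 1 ≤ j → j ≤ qbSize q i → ∃ v, ℓ v = (i, j)) ∧
  (∀ v w : V, v ≠ w → G.mult v w =
    if (ℓ v).1 = (ℓ w).1 then 1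
    else if (ℓ v).1 + 1 = (ℓ w).1 ∧ (ℓ v).2 = 1 then (∑ i ∈ Finset.Icc 1 (ℓ v).1, q i) + 2
    else if (ℓ w).1 + 1 = (ℓ v).1 ∧ (ℓ w).2 = 1 then (∑ i ∈ Finset.Icc 1 (ℓ w).1, q i) + 2
    else 0)

/-- A graph is a quasi-banana graph if it is isomorphic to some `QB_m(N)`. -/
def Multigraph.IsQuasiBanana (G : Multigraph V) : Prop :=
  ∃ (m : ℕ) (q : ℕ → ℕ) (ℓ : V → ℕ × ℕ), G.IsQBLabelling m q ℓ

/-- The graph obtained from `G'` by attaching a complete graph `K_n`: `n` new vertices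
pairwise joined by exactly one edge, each joined to `v` by exactly `k+1` edges. -/
def attachComplete (G' : Multigraph V) (v : V) (k n : ℕ) : Multigraph (V ⊕ Fin n) where
  mult x y :=
    match x, y with
    | Sum.inl a, Sum.inl b => G'.mult a b
    | Sum.inl a, Sum.inr _ => if a = v then k + 1 else 0
    | Sum.inr _, Sum.inl b => if b = v then k + 1 else 0
    | Sum.inr i, Sum.inr j => if i = j then 0 else 1
  symm := by
    rintro (a | i) (b | j)
    · exact G'.symm a b
    · rfl
    · rfl
    · by_cases h : i = j
      · simp [h]
      · simp [h, Ne.symm h]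
  loopless := by
    rintro (a | i)
    · exact G'.loopless a
    · simp

/-!
A quasi-banana graph grows from a single vertex by attaching complete graphs: each vertex of a new
clique is joined by `n + 1` edges to one vertex `v` of the part `S` built so far, where `n` is the
number of vertices of `S`. Counting edges by induction gives `|E| = C(|V| + 1, 2) - 1`, so the genus
is `C(|V|, 2)` by Pascal's rule, and it remains to see that the gonality is `|V|`.

One chip on every vertex gives a divisor of positive rank and degree `|V|`. Conversely, suppose that
an effective divisor `D` of degree less than `|V|` has positive rank. A firing script between two
effective divisors takes equal values at two vertices that are not separated by a cut of size at
most their degree. The vertices of the last clique are separated from `v` only by cuts of size at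
least `|V|`, so every such script starting from `D` is constant on the clique and `v`. Hence no chip
moves into or out of the clique, `D` already has a chip on each of its vertices, and the restriction
of `D` to `S` has positive rank and degree less than `|S|`, contradicting the induction hypothesis.
-/

namespace Multigraph

section Divisor

variable {W : Type*} {D D₁ D₂ : W → ℤ}

lemma Effective.add (h₁ : Effective D₁) (h₂ : Effective D₂) : Effective (D₁ + D₂) :=
  fun w => add_nonneg (h₁ w) (h₂ w)

lemma effective_single [DecidableEq W] (v : W) {n : ℤ} (hn : 0 ≤ n) :
    Effective (Pi.single v n) :=
  show (0 : W → ℤ) ≤ Pi.single v n from Pi.single_nonneg.mpr hn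

variable [Fintype W]

lemma degree_add (D E : W → ℤ) : degree (D + E) = degree D + degree E := sum_add_distrib

lemma degree_sub (D E : W → ℤ) : degree (D - E) = degree D - degree E := sum_sub_distrib ..

lemma degree_single [DecidableEq W] (v : W) (n : ℤ) : degree (Pi.single v n) = n := by
  simp [degree]

lemma Effective.apply_le_degree (h : Effective D) (v : W) : D v ≤ degree D :=
  single_le_sum (fun w _ => h w) (mem_univ v)

lemma Effective.eq_single_of_degree_eq_one [DecidableEq W] (h : Effective D)
    (hdeg : degree D = 1) : ∃ v, D = Pi.single v 1 := by
  obtain ⟨v, -, hv⟩ : ∃ v ∈ univ, 0 < D v := by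
    by_contra! hle
    have : degree D ≤ 0 := sum_nonpos hle
    omega
  have hsub : 0 ≤ D - Pi.single v 1 := fun w => by
    rcases eq_or_ne w v with rfl | hw
    · simpa [Order.one_le_iff_pos] using hv
    · simpa [hw] using h w
  have hzero : degree (D - Pi.single v 1) = 0 := by rw [degree_sub, degree_single, hdeg, sub_self]
  exact ⟨v, sub_eq_zero.mp ((Fintype.sum_eq_zero_iff_of_nonneg hsub).mp hzero)⟩

end Divisor

section LinearEquivalence

variable (G : Multigraph V)

lemma laplacian_add (f g : V → ℤ) : G.laplacian (f + g) = G.laplacian f + G.laplacian g := by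
  funext w
  simp only [laplacian, Pi.add_apply, ← sum_add_distrib]
  exact sum_congr rfl fun u _ => by ring

lemma laplacian_neg (f : V → ℤ) : G.laplacian (-f) = -G.laplacian f := by
  funext w
  simp only [laplacian, Pi.neg_apply, ← sum_neg_distrib]
  exact sum_congr rfl fun u _ => by ring

lemma sum_sum_mult_mul_sub (A : Finset V) (f : V → ℤ) :
    ∑ w ∈ A, ∑ u ∈ A, (G.mult w u : ℤ) * (f w - f u) = 0 := by
  have hswap : ∑ w ∈ A, ∑ u ∈ A, (G.mult w u : ℤ) * f u =
      ∑ w ∈ A, ∑ u ∈ A, (G.mult w u : ℤ) * f w := by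
    rw [sum_comm]
    exact sum_congr rfl fun w _ => sum_congr rfl fun u _ => by rw [G.symm]
  simp only [mul_sub, sum_sub_distrib, hswap, sub_self]

lemma sum_laplacian (A : Finset V) (f : V → ℤ) :
    ∑ w ∈ A, G.laplacian f w = ∑ w ∈ A, ∑ u ∈ Aᶜ, (G.mult w u : ℤ) * (f w - f u) := by
  simp only [laplacian, ← sum_add_sum_compl A, sum_add_distrib, G.sum_sum_mult_mul_sub A f,
    zero_add]

lemma degree_laplacian (f : V → ℤ) : degree (G.laplacian f) = 0 := by
  simp [degree, sum_laplacian]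

variable {G} {D D₁ D₂ D₃ : V → ℤ}

lemma LinEquiv.symm (h : G.LinEquiv D₁ D₂) : G.LinEquiv D₂ D₁ := by
  obtain ⟨f, rfl⟩ := h
  exact ⟨-f, by rw [laplacian_neg]; abel⟩

lemma LinEquiv.trans (h : G.LinEquiv D₁ D₂) (h' : G.LinEquiv D₂ D₃) : G.LinEquiv D₁ D₃ := by
  obtain ⟨f, rfl⟩ := h
  obtain ⟨g, rfl⟩ := h'
  exact ⟨f + g, by rw [laplacian_add]; abel⟩

lemma LinEquiv.sub_right (h : G.LinEquiv D₁ D₂) (E : V → ℤ) :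
    G.LinEquiv (D₁ - E) (D₂ - E) := by
  obtain ⟨f, rfl⟩ := h
  exact ⟨f, by abel⟩

lemma LinEquiv.degree_eq (h : G.LinEquiv D₁ D₂) : degree D₁ = degree D₂ := by
  obtain ⟨f, rfl⟩ := h
  rw [degree_sub, degree_laplacian, sub_zero]

lemma LinEquiv.winnable_iff (h : G.LinEquiv D₁ D₂) : G.Winnable D₁ ↔ G.Winnable D₂ :=
  ⟨fun ⟨E, hE, hD⟩ => ⟨E, hE, h.symm.trans hD⟩, fun ⟨E, hE, hD⟩ => ⟨E, hE, h.trans hD⟩⟩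

lemma Effective.winnable (h : Effective D) : G.Winnable D :=
  ⟨D, h, 0, by funext w; simp [laplacian]⟩

end LinearEquivalence

section Rank

variable {G : Multigraph V} {D D₁ D₂ : V → ℤ} {r : ℤ}

variable (G) in
/-- The condition that the Baker–Norine rank of `D` is at least `r`, in the form in which it enters
the definition of `Multigraph.rank`: for `r < 0` it is vacuous. -/
def HasRankGE (D : V → ℤ) (r : ℤ) : Prop :=
  ∀ E : V → ℤ, Effective E → degree E = r → G.Winnable (D - E)

lemma LinEquiv.hasRankGE (h : G.LinEquiv D₁ D₂) (h₁ : G.HasRankGE D₁ r) : G.HasRankGE D₂ r :=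
  fun E hE hdeg => (h.sub_right E).winnable_iff.mp (h₁ E hE hdeg)

lemma HasRankGE.sub {E : V → ℤ} (h : G.HasRankGE D r) (hE : Effective E) :
    G.HasRankGE (D - E) (r - degree E) := fun F hF hdeg => by
  rw [sub_sub]
  exact h (E + F) (hE.add hF) (by rw [degree_add, hdeg, add_sub_cancel])

lemma hasRankGE_of_forall_le (h : ∀ w, r ≤ D w) : G.HasRankGE D r := fun _ hE hdeg =>
  Effective.winnable fun w => sub_nonneg.mpr ((hdeg ▸ hE.apply_le_degree w).trans (h w))

lemma hasRankGE_one_iff :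
    G.HasRankGE D 1 ↔ ∀ w, ∃ D', Effective D' ∧ 0 < D' w ∧ G.LinEquiv D D' := by
  constructor
  · intro h w
    obtain ⟨E, hE, hDE⟩ := h _ (effective_single w zero_le_one) (degree_single w 1)
    refine ⟨E + Pi.single w 1, hE.add (effective_single w zero_le_one), ?_, ?_⟩
    · simpa using Int.lt_add_one_iff.mpr (hE w)
    · simpa using hDE.sub_right (-Pi.single w 1)
  · intro h E hE hdeg
    obtain ⟨w, rfl⟩ := hE.eq_single_of_degree_eq_one hdeg
    obtain ⟨D', hD', hw, hDD'⟩ := h w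
    refine ⟨D' - Pi.single w 1, fun x => ?_, hDD'.sub_right _⟩
    rcases eq_or_ne x w with rfl | hx
    · simpa [Order.one_le_iff_pos] using hw
    · simpa [hx] using hD' x

/-- For `r = 0` the equation may hold by the junk value `sSup s = 0` of an empty or unbounded set of
integers. -/
lemma hasRankGE_of_rank_eq (hr : r ≠ 0) (h : G.rank D = r) : G.HasRankGE D r := by
  set s := {r | G.HasRankGE D r}
  change sSup s = r at h
  have hne : s.Nonempty := by
    by_contra hs
    exact hr (by rw [← h, Set.not_nonempty_iff_eq_empty.mp hs, Int.csSup_empty])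
  have hbdd : BddAbove s := by
    by_contra hs
    exact hr (by rw [← h, Int.csSup_of_not_bddAbove hs])
  exact h ▸ Int.csSup_mem hne hbdd

lemma rank_eq_of_degree_minimal [Nonempty V] (hD : G.HasRankGE D r)
    (hmin : ∀ D', G.HasRankGE D' r → degree D ≤ degree D') : G.rank D = r := by
  refine IsGreatest.csSup_eq ⟨hD, fun s (hs : G.HasRankGE D s) => ?_⟩
  by_contra! hlt
  obtain ⟨v⟩ := ‹Nonempty V›
  have hrank := hs.sub (effective_single v (sub_nonneg.mpr hlt.le))
  rw [degree_single, sub_sub_cancel] at hrank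
  have hle := hmin _ hrank
  rw [degree_sub, degree_single] at hle
  omega

lemma gonality_eq_degree [Nonempty V] (hr : r ≠ 0) (hD : G.HasRankGE D r)
    (hmin : ∀ D', G.HasRankGE D' r → degree D ≤ degree D') : G.gonality r = degree D := by
  refine IsLeast.csInf_eq ⟨⟨D, rank_eq_of_degree_minimal hD hmin, rfl⟩, ?_⟩
  rintro _ ⟨D', hrank, rfl⟩
  exact hmin D' (hasRankGE_of_rank_eq hr hrank)

end Rank

section Cut

variable {G : Multigraph V} {D f : V → ℤ} {c v : V}

variable (G) in
/-- The number of edges of `G` between `A` and its complement. -/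
def cut (A : Finset V) : ℕ := ∑ w ∈ A, ∑ u ∈ Aᶜ, G.mult w u

lemma cut_le_sum_laplacian {A : Finset V} (h : ∀ w ∈ A, ∀ u ∉ A, f u < f w) :
    (G.cut A : ℤ) ≤ ∑ w ∈ A, G.laplacian f w := by
  rw [sum_laplacian, cut]
  push_cast
  refine sum_le_sum fun w hw => sum_le_sum fun u hu => ?_
  have hfuw := h w hw u (mem_compl.mp hu)
  exact le_mul_of_one_le_right (Int.natCast_nonneg _) (by omega)

lemma exists_cut_le_degree (hD : Effective D) (hD' : Effective (D - G.laplacian f))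
    (hlt : f v < f c) : ∃ A : Finset V, c ∈ A ∧ v ∉ A ∧ (G.cut A : ℤ) ≤ degree D := by
  refine ⟨({w | f c ≤ f w} : Finset V), by simp, by simpa using hlt, ?_⟩
  calc (G.cut {w | f c ≤ f w} : ℤ)
      ≤ ∑ w with f c ≤ f w, G.laplacian f w := cut_le_sum_laplacian fun w hw u hu => by
        simp only [mem_filter_univ, not_le] at hw hu
        exact hu.trans_le hw
    _ ≤ ∑ w with f c ≤ f w, D w := sum_le_sum fun w _ => sub_nonneg.mp (hD' w)
    _ ≤ degree D := sum_le_univ_sum_of_nonneg hD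

lemma apply_eq_apply_of_degree_lt_cut (hD : Effective D) (hD' : Effective (D - G.laplacian f))
    (hcut : ∀ A : Finset V, c ∈ A → v ∉ A → degree D < G.cut A) : f c = f v := by
  rcases lt_trichotomy (f c) (f v) with hlt | heq | hlt
  · -- Firing `-f` leads back from `D - Δf` to `D`.
    have hback : Effective (D - G.laplacian f - G.laplacian (-f)) := by
      simpa [laplacian_neg] using hD
    obtain ⟨A, hc, hv, hA⟩ := exists_cut_le_degree (v := v) (c := c) hD' hback (by simpa using hlt)
    rw [degree_sub, degree_laplacian, sub_zero] at hA
    exact absurd (hcut A hc hv) hA.not_gt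
  · exact heq
  · obtain ⟨A, hc, hv, hA⟩ := exists_cut_le_degree hD hD' hlt
    exact absurd (hcut A hc hv) hA.not_gt

end Cut

/-- `G` arises from its subgraph induced on `S` by attaching a complete graph at `v ∈ S`: the
vertices outside `S` form a clique with simple edges, and each of them is joined by `#S + 1` edges
to `v` and by none to the rest of `S`. -/
structure IsCliqueAttachment (G : Multigraph V) (S : Finset V) (v : V) : Prop where
  mem : v ∈ S
  mult_root : ∀ c ∉ S, G.mult c v = #S + 1
  mult_of_ne_root : ∀ c ∉ S, ∀ x ∈ S, x ≠ v → G.mult c x = 0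
  mult_clique : ∀ c ∉ S, ∀ d ∉ S, c ≠ d → G.mult c d = 1

namespace IsCliqueAttachment

variable {G : Multigraph V} {S : Finset V} {v : V}

lemma card_le_cut (h : G.IsCliqueAttachment S v) {c : V} (hc : c ∉ S) {A : Finset V}
    (hcA : c ∈ A) (hvA : v ∉ A) : Fintype.card V ≤ G.cut A := by
  have hpos : 1 ≤ #(A \ S) := card_pos.mpr ⟨c, mem_sdiff.mpr ⟨hcA, hc⟩⟩
  have hcard : #S + (#(A \ S) + #(Aᶜ \ S)) = Fintype.card V := by
    rw [← card_union_of_disjoint (disjoint_compl_right.mono sdiff_subset sdiff_subset),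
      ← union_sdiff_distrib, union_compl, ← compl_eq_univ_sdiff, card_add_card_compl]
  have hrow : ∀ w ∈ A \ S, #S + 1 + #(Aᶜ \ S) ≤ ∑ u ∈ Aᶜ, G.mult w u := fun w hw => by
    obtain ⟨hwA, hwS⟩ := mem_sdiff.mp hw
    have hclique : ∑ u ∈ Aᶜ \ S, G.mult w u = #(Aᶜ \ S) := by
      rw [card_eq_sum_ones]
      refine sum_congr rfl fun u hu => ?_
      obtain ⟨huA, huS⟩ := mem_sdiff.mp hu
      exact h.mult_clique w hwS u huS (ne_of_mem_of_not_mem hwA (mem_compl.mp huA))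
    calc #S + 1 + #(Aᶜ \ S) = ∑ u ∈ insert v (Aᶜ \ S), G.mult w u := by
          rw [sum_insert fun hv => (mem_sdiff.mp hv).2 h.mem, h.mult_root w hwS, hclique]
      _ ≤ ∑ u ∈ Aᶜ, G.mult w u :=
          sum_le_sum_of_subset (insert_subset (mem_compl.mpr hvA) sdiff_subset)
  calc Fintype.card V = #S + (#(A \ S) + #(Aᶜ \ S)) := hcard.symm
    _ ≤ #(A \ S) * (#S + 1 + #(Aᶜ \ S)) := by nlinarith
    _ ≤ ∑ w ∈ A \ S, ∑ u ∈ Aᶜ, G.mult w u := by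
        simpa using card_nsmul_le_sum _ _ _ hrow
    _ ≤ G.cut A := sum_le_sum_of_subset sdiff_subset

lemma script_eq_root (h : G.IsCliqueAttachment S v) {D f : V → ℤ} (hD : Effective D)
    (hD' : Effective (D - G.laplacian f)) (hdeg : degree D < Fintype.card V) :
    ∀ c ∉ S, f c = f v := fun _ hc =>
  apply_eq_apply_of_degree_lt_cut hD hD' fun _ hcA hvA =>
    hdeg.trans_le (Int.ofNat_le.mpr (h.card_le_cut hc hcA hvA))

lemma laplacian_apply_of_notMem (h : G.IsCliqueAttachment S v) {f : V → ℤ}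
    (hf : ∀ c ∉ S, f c = f v) {c : V} (hc : c ∉ S) : G.laplacian f c = 0 := by
  refine sum_eq_zero fun u _ => ?_
  by_cases hu : u ∈ S
  · rcases eq_or_ne u v with rfl | huv
    · rw [hf c hc, sub_self, mul_zero]
    · rw [h.mult_of_ne_root c hc u hu huv, Nat.cast_zero, zero_mul]
  · rw [hf c hc, hf u hu, sub_self, mul_zero]

lemma laplacian_apply_of_mem (h : G.IsCliqueAttachment S v) {f : V → ℤ}
    (hf : ∀ c ∉ S, f c = f v) (x : S) :
    G.laplacian f x = (G.induce S).laplacian (fun y => f y) x := by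
  have hout : ∑ u ∈ Sᶜ, (G.mult x u : ℤ) * (f x - f u) = 0 := sum_eq_zero fun u hu => by
    have hu := mem_compl.mp hu
    rcases eq_or_ne x.1 v with hxv | hxv
    · rw [hf u hu, hxv, sub_self, mul_zero]
    · rw [G.symm, h.mult_of_ne_root u hu x x.2 hxv, Nat.cast_zero, zero_mul]
  rw [laplacian, ← sum_add_sum_compl S, hout, add_zero, ← sum_coe_sort]
  rfl

lemma one_le_of_hasRankGE_one (h : G.IsCliqueAttachment S v) {D : V → ℤ} (hD : Effective D)
    (hdeg : degree D < Fintype.card V) (hrank : G.HasRankGE D 1) : ∀ c ∉ S, 1 ≤ D c := by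
  intro c hc
  obtain ⟨_, hD', hpos, f, rfl⟩ := hasRankGE_one_iff.mp hrank c
  have hf := h.script_eq_root hD hD' hdeg
  simpa [h.laplacian_apply_of_notMem hf hc, Order.one_le_iff_pos] using hpos

lemma hasRankGE_one_induce (h : G.IsCliqueAttachment S v) {D : V → ℤ} (hD : Effective D)
    (hdeg : degree D < Fintype.card V) (hrank : G.HasRankGE D 1) :
    (G.induce S).HasRankGE (fun x => D x) 1 := by
  refine hasRankGE_one_iff.mpr fun w => ?_
  obtain ⟨_, hD', hpos, f, rfl⟩ := hasRankGE_one_iff.mp hrank w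
  have hf := h.script_eq_root hD hD' hdeg
  refine ⟨fun x => (D - G.laplacian f) x, fun x => hD' x, hpos, fun y => f y, ?_⟩
  funext x
  exact congrArg (D x - ·) (h.laplacian_apply_of_mem hf x)

lemma card_le_degree_of_hasRankGE_one (h : G.IsCliqueAttachment S v)
    (hS : ∀ D, (G.induce S).HasRankGE D 1 → (Fintype.card S : ℤ) ≤ degree D)
    {D : V → ℤ} (hrank : G.HasRankGE D 1) : (Fintype.card V : ℤ) ≤ degree D := by
  wlog hD : Effective D generalizing D
  · obtain ⟨D', hD', -, hDD'⟩ := hasRankGE_one_iff.mp hrank v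
    exact hDD'.degree_eq ▸ this (hDD'.hasRankGE hrank) hD'
  by_contra! hdeg
  have hin : (#S : ℤ) ≤ ∑ x ∈ S, D x := by
    simpa [degree, sum_attach S D] using hS _ (h.hasRankGE_one_induce hD hdeg hrank)
  have hout : (#Sᶜ : ℤ) ≤ ∑ c ∈ Sᶜ, D c := by
    simpa using card_nsmul_le_sum Sᶜ D 1 fun c hc =>
      h.one_le_of_hasRankGE_one hD hdeg hrank c (mem_compl.mp hc)
  have hcard := card_add_card_compl S
  have hsum : ∑ x ∈ S, D x + ∑ c ∈ Sᶜ, D c = degree D := sum_add_sum_compl S D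
  omega

lemma sum_mult_of_notMem (h : G.IsCliqueAttachment S v) {c : V} (hc : c ∉ S) :
    ∑ x ∈ S, G.mult c x = #S + 1 := by
  rw [sum_eq_single_of_mem v h.mem (h.mult_of_ne_root c hc), h.mult_root c hc]

lemma sum_compl_mult_of_notMem (h : G.IsCliqueAttachment S v) {c : V} (hc : c ∉ S) :
    ∑ d ∈ Sᶜ, G.mult c d = #Sᶜ - 1 := by
  have hcS : c ∈ Sᶜ := mem_compl.mpr hc
  rw [← add_sum_erase _ _ hcS, G.loopless, zero_add, ← card_erase_of_mem hcS, card_eq_sum_ones]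
  exact sum_congr rfl fun d hd =>
    h.mult_clique c hc d (mem_compl.mp (mem_of_mem_erase hd)) (ne_of_mem_erase hd).symm

lemma sum_mult_eq (h : G.IsCliqueAttachment S v) :
    ∑ u, ∑ w, G.mult u w =
      ∑ u, ∑ w, (G.induce S).mult u w + #Sᶜ * (2 * (#S + 1) + (#Sᶜ - 1)) := by
  have hin : ∑ u ∈ S, ∑ w ∈ S, G.mult u w = ∑ u, ∑ w, (G.induce S).mult u w := by
    rw [← sum_coe_sort]
    exact sum_congr rfl fun u _ => (sum_coe_sort S _).symm
  have hout : ∑ c ∈ Sᶜ, ∑ x ∈ S, G.mult c x = #Sᶜ * (#S + 1) :=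
    sum_const_nat fun c hc => h.sum_mult_of_notMem (mem_compl.mp hc)
  have hout' : ∑ x ∈ S, ∑ c ∈ Sᶜ, G.mult x c = #Sᶜ * (#S + 1) := by
    rw [sum_comm, ← hout]
    exact sum_congr rfl fun c _ => sum_congr rfl fun x _ => G.symm x c
  have hclique : ∑ c ∈ Sᶜ, ∑ d ∈ Sᶜ, G.mult c d = #Sᶜ * (#Sᶜ - 1) :=
    sum_const_nat fun c hc => h.sum_compl_mult_of_notMem (mem_compl.mp hc)
  simp only [← sum_add_sum_compl S, sum_add_distrib]
  rw [hin, hout, hout', hclique]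
  ring

end IsCliqueAttachment

/-- Graphs obtained from a single vertex by repeatedly attaching complete graphs in the sense of
`Multigraph.IsCliqueAttachment`. In a quasi-banana graph each complete graph is attached at a vertex
of the preceding one; here any earlier vertex is allowed. -/
inductive IsCliqueTower.{u} :
    ∀ {V : Type u} [Fintype V] [DecidableEq V], Multigraph V → Prop
  | singleton {V : Type u} [Fintype V] [DecidableEq V] (G : Multigraph V)
      (hV : Fintype.card V = 1) : IsCliqueTower G
  | attach {V : Type u} [Fintype V] [DecidableEq V] (G : Multigraph V) (S : Finset V) (v : V)
      (hS : IsCliqueTower (G.induce S)) (hG : G.IsCliqueAttachment S v) : IsCliqueTower G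

namespace IsCliqueTower

variable {G : Multigraph V}

lemma nonempty (hG : G.IsCliqueTower) : Nonempty V := by
  cases hG with
  | singleton _ hV => exact Fintype.card_pos_iff.mp (hV ▸ one_pos)
  | attach _ _ v => exact ⟨v⟩

/-- The sum counts every edge twice, so a clique tower on `n` vertices has `(n + 1).choose 2 - 1`
edges. -/
lemma sum_mult_add_two (hG : G.IsCliqueTower) :
    ∑ u, ∑ w, G.mult u w + 2 = Fintype.card V * (Fintype.card V + 1) := by
  induction hG with
  | singleton G hV =>
    obtain ⟨v, hv⟩ := Fintype.card_eq_one_iff.mp hV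
    simp [hV, hv, G.loopless]
  | attach G S v _ hG ih =>
    rw [hG.sum_mult_eq, ← card_add_card_compl S]
    rw [Fintype.card_coe] at ih
    generalize #Sᶜ = m
    cases m <;> grind

lemma genus_eq (hG : G.IsCliqueTower) : G.genus = (Fintype.card V).choose 2 := by
  have hsum := hG.sum_mult_add_two
  have habsorb := Nat.add_one_mul_choose_eq (Fintype.card V) 1
  have hpascal := Nat.choose_succ_succ' (Fintype.card V) 1
  rw [Nat.choose_one_right] at habsorb hpascal
  have hedges : ∑ u, ∑ w, G.mult u w + 2 = 2 * (Fintype.card V + (Fintype.card V).choose 2) := by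
    rw [hsum, ← hpascal, mul_comm, habsorb, mul_comm]
  unfold genus
  omega

lemma card_le_degree_of_hasRankGE_one (hG : G.IsCliqueTower) :
    ∀ D, G.HasRankGE D 1 → (Fintype.card V : ℤ) ≤ degree D := by
  induction hG with
  | singleton G hV =>
    intro D hD
    obtain ⟨v, -⟩ := Fintype.card_eq_one_iff.mp hV
    obtain ⟨D', hD', hv, hDD'⟩ := hasRankGE_one_iff.mp hD v
    rw [hV, hDD'.degree_eq]
    exact hv.trans_le (hD'.apply_le_degree v)
  | attach G S v _ hG ih => exact fun D => hG.card_le_degree_of_hasRankGE_one ih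

lemma gonality_one (hG : G.IsCliqueTower) : G.gonality 1 = Fintype.card V := by
  have := hG.nonempty
  have hdeg : degree (fun _ : V => 1) = Fintype.card V := by simp [degree]
  rw [← hdeg]
  exact gonality_eq_degree one_ne_zero (hasRankGE_of_forall_le fun _ => le_rfl) fun D hD =>
    hdeg ▸ hG.card_le_degree_of_hasRankGE_one D hD

end IsCliqueTower

namespace IsQBLabelling

variable {G : Multigraph V} {m n : ℕ} {q : ℕ → ℕ} {ℓ : V → ℕ × ℕ}

lemma card_eq (h : G.IsQBLabelling m q ℓ) :
    Fintype.card V = 1 + ∑ i ∈ Icc 1 m, q i := by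
  obtain ⟨-, hinj, hrange, hsurj, -⟩ := h
  have hlabels : Fintype.card V = #((range (m + 1)).sigma fun i => Icc 1 (qbSize q i)) := by
    refine card_bij (fun v _ => ⟨(ℓ v).1, (ℓ v).2⟩) (fun v _ => ?_) (fun v _ w _ hvw => ?_) ?_
    · simpa [Nat.lt_succ_iff] using hrange v
    · exact hinj (Prod.ext (congrArg Sigma.fst hvw) (by simp_all))
    · rintro ⟨i, j⟩ hij
      simp only [mem_sigma, mem_range, Nat.lt_succ_iff, mem_Icc] at hij
      obtain ⟨v, hv⟩ := hsurj i j hij.1 hij.2.1 hij.2.2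
      exact ⟨v, mem_univ v, by rw [hv]⟩
  have hsum : ∑ i ∈ Icc 1 m, qbSize q i = ∑ i ∈ Icc 1 m, q i := sum_congr rfl fun i hi =>
    if_neg (Nat.one_le_iff_ne_zero.mp (mem_Icc.mp hi).1)
  simp only [hlabels, card_sigma, Nat.card_Icc, add_tsub_cancel_right]
  rw [sum_range_eq_add_Ico _ m.succ_pos, Nat.succ_eq_add_one, Ico_add_one_right_eq_Icc, hsum]
  rfl

lemma induce (h : G.IsQBLabelling m q ℓ) (hnm : n ≤ m) :
    (G.induce {v | (ℓ v).1 ≤ n}).IsQBLabelling n q fun x => ℓ x := by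
  obtain ⟨hpos, hinj, hrange, hsurj, hmult⟩ := h
  refine ⟨fun i h1 hi => hpos i h1 (hi.trans hnm), hinj.comp Subtype.val_injective,
    fun x => ⟨(mem_filter.mp x.2).2, (hrange x).2⟩, fun i j hi h1 hj => ?_,
    fun x y hxy => hmult x y (Subtype.coe_ne_coe.mpr hxy)⟩
  obtain ⟨v, hv⟩ := hsurj i j (hi.trans hnm) h1 hj
  exact ⟨⟨v, by simpa [hv] using hi⟩, hv⟩

lemma exists_isCliqueAttachment (h : G.IsQBLabelling (m + 1) q ℓ) :
    ∃ v, G.IsCliqueAttachment {v | (ℓ v).1 ≤ m} v := by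
  have hcard := (h.induce m.le_succ).card_eq
  obtain ⟨hpos, hinj, hrange, hsurj, hmult⟩ := h
  have hlevel : 1 ≤ qbSize q m := by
    unfold qbSize
    split_ifs with hm
    · exact le_rfl
    · exact hpos m (Nat.pos_of_ne_zero hm) m.le_succ
  obtain ⟨v, hv⟩ := hsurj m 1 m.le_succ le_rfl hlevel
  have htop : ∀ c ∉ ({v | (ℓ v).1 ≤ m} : Finset V), (ℓ c).1 = m + 1 := fun c hc =>
    le_antisymm (hrange c).1 (by simpa using hc)
  refine ⟨v, by simp [hv], fun c hc => ?_, fun c hc x hx hxv => ?_, fun c hc d hd hcd => ?_⟩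
  · rw [Fintype.card_coe] at hcard
    have hcv : c ≠ v := by
      rintro rfl
      simp [hv] at hc
    rw [hmult c v hcv, hcard, htop c hc, hv, if_neg (by simp), if_neg (by omega),
      if_pos ⟨rfl, rfl⟩]
    ring
  · have hxm : (ℓ x).1 ≤ m := by simpa using hx
    have hxv' : ¬ ((ℓ x).1 + 1 = m + 1 ∧ (ℓ x).2 = 1) := fun ⟨h1, h2⟩ =>
      hxv (hinj (by rw [hv, ← Nat.succ_injective h1, ← h2]))
    rw [hmult c x (fun hcx => hc (hcx ▸ hx)), htop c hc, if_neg (by omega), if_neg (by omega),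
      if_neg hxv']
  · rw [hmult c d hcd, if_pos ((htop c hc).trans (htop d hd).symm)]

lemma isCliqueTower (h : G.IsQBLabelling m q ℓ) : G.IsCliqueTower := by
  induction m generalizing V with
  | zero => exact .singleton G (by simpa using h.card_eq)
  | succ m ih =>
    obtain ⟨v, hv⟩ := h.exists_isCliqueAttachment
    exact .attach G _ v (ih (h.induce m.le_succ)) hv

end IsQBLabelling

end Multigraph

theorem stmt1_general (G : Multigraph V) (hG : G.IsCliqueTower) (k : ℕ)
    (hk : G.gonality 1 = (k : ℤ)) : G.genus = (Nat.choose k 2 : ℤ) := by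
  obtain rfl : Fintype.card V = k := by exact_mod_cast hG.gonality_one.symm.trans hk
  exact hG.genus_eq

/-- If `G` is a quasi-banana graph with first gonality `k`, then the genus
of `G` equals `C(k,2)`. -/
theorem stmt1 (G : Multigraph V) (hG : G.Connected) (hQB : G.IsQuasiBanana)
    (k : ℕ) (hk : G.gonality 1 = (k : ℤ)) :
    G.genus = (Nat.choose k 2 : ℤ) := by
  obtain ⟨_, _, _, hℓ⟩ := hQB
  exact stmt1_general G hℓ.isCliqueTower k hk
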